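/- Memoization-table lookups are bounded by in-degree for Memo-la (Lemma 9): For every run s of an execution of Memo-la, every state q ∈ P, and every position i ∈ {0, …, |w|}, the element M(q, i) appears at most #in(q) − 1 times in s. -/

import Mathlib

namespace RegexMemo

/-! ## Generic runs, `φ`, `sub`, `sub*` -/

variable {α : Type}

/-- `φ_s(ℓ, n)`: the index of the result value of the call at index `ℓ`. -/
def phiAux (isRet : α → Bool) (s : List α) (ℓ n : ℕ) : Option ℕ :=
  match h : s[ℓ]? with
  | none => none
  | some e =>
    if isRet e then
      if n ≤ 1 then some ℓ
      else phiAux isRet s (ℓ + 1) (n - 1)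
    else phiAux isRet s (ℓ + 1) (n + 1)
termination_by s.length - ℓ
decreasing_by
  all_goals
    have hl : ℓ < s.length := by
      by_contra hc
      have : s[ℓ]? = none := List.getElem?_eq_none (by omega)
      simp [this] at h
    omega

/-- `φ_s(ℓ) = φ_s(ℓ, 0)`. -/
def phi (isRet : α → Bool) (s : List α) (ℓ : ℕ) : Option ℕ := phiAux isRet s ℓ 0

/-- `sub(s, ℓ)`: replace the memoization-table invocation at index `ℓ` (an element
`M(q,i)` together with its immediately following result) by `C(q,i)` followed by the
subsequence `s[ℓ'+1] … s[φ_s(ℓ')]`, where `ℓ'` is the first index with `s[ℓ'] = C(q,i)`.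
Here `m2c` maps a memoization element `M(q,i)` to the corresponding call element `C(q,i)`
(and everything else to `none`), and `isRet` recognizes result elements. -/
def subExpand [DecidableEq α] (m2c : α → Option α) (isRet : α → Bool)
    (s : List α) (ℓ : ℕ) : Option (List α) :=
  match s[ℓ]? with
  | some e =>
    match m2c e with
    | some c =>
      match s.findIdx? (· == c) with
      | some ℓ' =>
        match phi isRet s ℓ' with
        | some m =>
          some (s.take ℓ ++ [c] ++ ((s.drop (ℓ' + 1)).take (m - ℓ')) ++ s.drop (ℓ + 2))
        | none => none
      | none => none
    | none => none
  | none => none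

/-- `sub*`: repeatedly locate the first memoization element and expand it,
until no memoization element remains. `SubStar m2c isRet s t` means `sub*(s) = t`. -/
inductive SubStar [DecidableEq α] (m2c : α → Option α) (isRet : α → Bool) :
    List α → List α → Prop where
  | done {s : List α} : s.findIdx? (fun e => (m2c e).isSome) = none →
      SubStar m2c isRet s s
  | step {s s' t : List α} {ℓ : ℕ} :
      s.findIdx? (fun e => (m2c e).isSome) = some ℓ →
      subExpand m2c isRet s ℓ = some s' →
      SubStar m2c isRet s' t →
      SubStar m2c isRet s t

/-- The number of (recursive) calls recorded in a run: the number of `C`/`M` elements. -/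
def callCount (isCall : α → Bool) (s : List α) : ℕ := (s.filter isCall).length

variable {Sigma S : Type}

/-- Results of backtracking matching: `SuccessAt i'` or `Failure`. -/
inductive Result : Type where
  | successAt : ℕ → Result
  | failure : Result
deriving DecidableEq

/-! ## Plain NFAs -/

/-- Transitions of a plain NFA. -/
inductive Trans (Sigma S : Type) : Type where
  | eps : S → Trans Sigma S
  | branch : S → S → Trans Sigma S
  | char : Sigma → S → Trans Sigma S

/-- A (plain) NFA over the alphabet `Sigma` with (finite) state type `S`:
an initial state, a set of accepting states, and a transition function
(whose value is only relevant on non-accepting states). -/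
structure NFA (Sigma S : Type) where
  q0 : S
  F : Set S
  T : S → Trans Sigma S

/-- One ε-step: an `Eps` or `Branch` transition of a non-accepting state. -/
def NFA.epsStep (A : NFA Sigma S) (q q' : S) : Prop :=
  q ∉ A.F ∧ (A.T q = Trans.eps q' ∨ (∃ q'', A.T q = Trans.branch q' q'') ∨
    (∃ q'', A.T q = Trans.branch q'' q'))

/-- The NFA has no ε-loops. -/
def NFA.NoEpsLoops (A : NFA Sigma S) : Prop :=
  ∀ q : S, ¬ Relation.TransGen A.epsStep q q

open Classical in
/-- The in-degree `#in(q)` of a state of a plain NFA. -/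
noncomputable def NFA.inDeg [Fintype S] (A : NFA Sigma S) (q : S) : ℕ :=
  (Finset.univ.filter fun q' : S => q' ∉ A.F ∧ A.T q' = Trans.eps q).card +
  (Finset.univ.filter fun q' : S => q' ∉ A.F ∧ ∃ σ, A.T q' = Trans.char σ q).card +
  (Finset.univ.filter fun q' : S => q' ∉ A.F ∧ ∃ q'', A.T q' = Trans.branch q q'').card +
  (Finset.univ.filter fun q' : S => q' ∉ A.F ∧ ∃ q'', A.T q' = Trans.branch q'' q).card +
  (if q = A.q0 then 1 else 0)

/-- The maximal in-degree `#in(A)` of a plain NFA. -/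
noncomputable def NFA.inDegMax [Fintype S] (A : NFA Sigma S) : ℕ :=
  Finset.univ.sup fun q : S => A.inDeg q

/-- Elements of runs of `Match`/`Memo`: calls `C(q,i)`, memoization-table invocations
`M(q,i)`, and results `S(i')` and `F`. -/
inductive RunElem (S : Type) : Type where
  | call : S → ℕ → RunElem S
  | memo : S → ℕ → RunElem S
  | succ : ℕ → RunElem S
  | fail : RunElem S
deriving DecidableEq

/-- The run element recording the return of a result. -/
def Result.elem {S : Type} : Result → RunElem S
  | .successAt i => .succ i
  | .failure => .fail

def RunElem.isRet : RunElem S → Bool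
  | .succ _ => true
  | .fail => true
  | _ => false

def RunElem.isCall : RunElem S → Bool
  | .call _ _ => true
  | .memo _ _ => true
  | _ => false

/-- `M(q,i) ↦ C(q,i)`. -/
def memoToCall : RunElem S → Option (RunElem S)
  | .memo q i => some (.call q i)
  | _ => none

/-- Big-step semantics (together with the produced run) of the backtracking
matching algorithm `Match` for plain NFAs:
`MatchRun A w q i r s` means the call `Match_{A,w}(q, i)` terminates with
result `r` and produces the run `s`. -/
inductive MatchRun (A : NFA Sigma S) (w : List Sigma) :
    S → ℕ → Result → List (RunElem S) → Prop where
  | accept {q : S} {i : ℕ} : q ∈ A.F →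
      MatchRun A w q i (.successAt i) [.call q i, .succ i]
  | eps {q q' : S} {i : ℕ} {r : Result} {s : List (RunElem S)} :
      q ∉ A.F → A.T q = Trans.eps q' →
      MatchRun A w q' i r s →
      MatchRun A w q i r (.call q i :: s ++ [r.elem])
  | branchSucc {q q' q'' : S} {i i' : ℕ} {s : List (RunElem S)} :
      q ∉ A.F → A.T q = Trans.branch q' q'' →
      MatchRun A w q' i (.successAt i') s →
      MatchRun A w q i (.successAt i') (.call q i :: s ++ [RunElem.succ i'])
  | branchFail {q q' q'' : S} {i : ℕ} {r : Result} {s s' : List (RunElem S)} :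
      q ∉ A.F → A.T q = Trans.branch q' q'' →
      MatchRun A w q' i .failure s →
      MatchRun A w q'' i r s' →
      MatchRun A w q i r (.call q i :: s ++ s' ++ [r.elem])
  | charSucc {q q' : S} {σ : Sigma} {i : ℕ} {r : Result} {s : List (RunElem S)} :
      q ∉ A.F → A.T q = Trans.char σ q' →
      w[i]? = some σ →
      MatchRun A w q' (i + 1) r s →
      MatchRun A w q i r (.call q i :: s ++ [r.elem])
  | charFail {q q' : S} {σ : Sigma} {i : ℕ} :
      q ∉ A.F → A.T q = Trans.char σ q' →
      w[i]? ≠ some σ →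
      MatchRun A w q i .failure [.call q i, .fail]

/-- Record `M(q,i) := Failure` in the memoization table if the result is a failure. -/
def recFail [DecidableEq S] (M : S × ℕ → Bool) (q : S) (i : ℕ) : Result → (S × ℕ → Bool)
  | .failure => fun p => if p = (q, i) then true else M p
  | _ => M

/-- Big-step semantics (with resulting memoization table and produced run) of the
memoized backtracking matching algorithm `Memo` for plain NFAs:
`MemoRun A w q i M M' r s` means the call `Memo^M_{A,w}(q, i)` terminates with result
`r`, final memoization table `M'` (where `M p = true` means `Failure` is recorded at the
key `p`), and produces the run `s`. -/
inductive MemoRun [DecidableEq S] (A : NFA Sigma S) (w : List Sigma) :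
    S → ℕ → (S × ℕ → Bool) → (S × ℕ → Bool) → Result → List (RunElem S) → Prop where
  | memoHit {q : S} {i : ℕ} {M : S × ℕ → Bool} : M (q, i) = true →
      MemoRun A w q i M M .failure [.memo q i, .fail]
  | accept {q : S} {i : ℕ} {M : S × ℕ → Bool} : M (q, i) = false → q ∈ A.F →
      MemoRun A w q i M M (.successAt i) [.call q i, .succ i]
  | eps {q q' : S} {i : ℕ} {M M' : S × ℕ → Bool} {r : Result} {s : List (RunElem S)} :
      M (q, i) = false → q ∉ A.F → A.T q = Trans.eps q' →
      MemoRun A w q' i M M' r s →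
      MemoRun A w q i M (recFail M' q i r) r (.call q i :: s ++ [r.elem])
  | branchSucc {q q' q'' : S} {i i' : ℕ} {M M' : S × ℕ → Bool} {s : List (RunElem S)} :
      M (q, i) = false → q ∉ A.F → A.T q = Trans.branch q' q'' →
      MemoRun A w q' i M M' (.successAt i') s →
      MemoRun A w q i M M' (.successAt i') (.call q i :: s ++ [RunElem.succ i'])
  | branchFail {q q' q'' : S} {i : ℕ} {M M' M'' : S × ℕ → Bool} {r : Result}
      {s s' : List (RunElem S)} :
      M (q, i) = false → q ∉ A.F → A.T q = Trans.branch q' q'' →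
      MemoRun A w q' i M M' .failure s →
      MemoRun A w q'' i M' M'' r s' →
      MemoRun A w q i M (recFail M'' q i r) r (.call q i :: s ++ s' ++ [r.elem])
  | charSucc {q q' : S} {σ : Sigma} {i : ℕ} {M M' : S × ℕ → Bool} {r : Result}
      {s : List (RunElem S)} :
      M (q, i) = false → q ∉ A.F → A.T q = Trans.char σ q' →
      w[i]? = some σ →
      MemoRun A w q' (i + 1) M M' r s →
      MemoRun A w q i M (recFail M' q i r) r (.call q i :: s ++ [r.elem])
  | charFail {q q' : S} {σ : Sigma} {i : ℕ} {M : S × ℕ → Bool} :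
      M (q, i) = false → q ∉ A.F → A.T q = Trans.char σ q' →
      w[i]? ≠ some σ →
      MemoRun A w q i M (recFail M q i .failure) .failure [.call q i, .fail]

/-! ## NFAs with sub-automata -/

/-- Kind labels of sub-automaton transitions: positive/negative look-ahead/look-behind
and atomic grouping. -/
inductive Kind : Type where
  | pla | nla | plb | nlb | at
deriving DecidableEq

mutual
/-- An NFA with sub-automata `⟨Q, q0, F, T⟩`: a list of top-level states, an initial
state, accepting states, and a transition function (relevant on non-accepting top-level
states) whose transitions may be labelled with further NFAs with sub-automata. -/
inductive SubNFA (Sigma S : Type) : Type where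
  | mk : List S → S → List S → (S → SubTrans Sigma S) → SubNFA Sigma S

/-- Transitions of an NFA with sub-automata. -/
inductive SubTrans (Sigma S : Type) : Type where
  | eps : S → SubTrans Sigma S
  | branch : S → S → SubTrans Sigma S
  | char : Sigma → S → SubTrans Sigma S
  | sub : Kind → SubNFA Sigma S → S → SubTrans Sigma S
end

/-- Top-level states `Q`. -/
def SubNFA.Q : SubNFA Sigma S → List S
  | .mk Q _ _ _ => Q

/-- Initial state `q0`. -/
def SubNFA.q0 : SubNFA Sigma S → S
  | .mk _ q0 _ _ => q0

/-- Accepting states `F`. -/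
def SubNFA.F : SubNFA Sigma S → List S
  | .mk _ _ F _ => F

/-- Transition function `T`. -/
def SubNFA.T : SubNFA Sigma S → S → SubTrans Sigma S
  | .mk _ _ _ T => T

mutual
/-- All automata occurring within an NFA with sub-automata (including itself), each
together with its nesting depth of atomic grouping (the number of enclosing
`at`-sub-automaton boundaries). -/
def SubNFA.compsD : SubNFA Sigma S → List (SubNFA Sigma S × ℕ)
  | .mk Q q0 F T => (.mk Q q0 F T, 0) :: Q.flatMap (fun q => SubTrans.subCompsD (T q))

def SubTrans.subCompsD : SubTrans Sigma S → List (SubNFA Sigma S × ℕ)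
  | .sub k A' _ => (SubNFA.compsD A').map (fun p => (p.1, p.2 + (if k = Kind.at then 1 else 0)))
  | _ => []
end

/-- All automata occurring within `A` (including `A` itself). -/
def SubNFA.comps (A : SubNFA Sigma S) : List (SubNFA Sigma S) :=
  A.compsD.map Prod.fst

/-- The set (list) of all states `P` occurring within `A`. -/
def SubNFA.allStates (A : SubNFA Sigma S) : List S :=
  A.comps.flatMap SubNFA.Q

/-- The nesting depth of atomic grouping `ν_A(q)` of a state `q` of `A`. -/
def SubNFA.nu [DecidableEq S] (A : SubNFA Sigma S) (q : S) : ℕ :=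
  (A.compsD.map (fun p => if q ∈ p.1.Q then p.2 else 0)).sum

/-- The maximal nesting depth of atomic grouping `ν(A)`. -/
def SubNFA.nuMax [DecidableEq S] (A : SubNFA Sigma S) : ℕ :=
  (A.allStates.map A.nu).foldr max 0

/-- Local wellformedness of one automaton: the initial state is a top-level state,
accepting states are top-level states, and transitions of non-accepting top-level
states lead to top-level states. -/
def SubNFA.LocalOK (B : SubNFA Sigma S) : Prop :=
  B.q0 ∈ B.Q ∧ (∀ f ∈ B.F, f ∈ B.Q) ∧ ∀ q ∈ B.Q, q ∉ B.F →
    match B.T q with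
    | .eps q' => q' ∈ B.Q
    | .branch q' q'' => q' ∈ B.Q ∧ q'' ∈ B.Q
    | .char _ q' => q' ∈ B.Q
    | .sub _ _ q' => q' ∈ B.Q

/-- Wellformedness of an NFA with sub-automata: every component automaton is locally
wellformed, and all the state lists are disjoint and duplicate-free (so that `P` is
the disjoint union of the top-level state sets of all components). -/
def SubNFA.WF (A : SubNFA Sigma S) : Prop :=
  (∀ B ∈ A.comps, B.LocalOK) ∧ A.allStates.Nodup

/-- The kind labels of all sub-automaton transitions occurring in `A`. -/
def SubNFA.kinds [DecidableEq S] (A : SubNFA Sigma S) : List Kind :=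
  A.comps.flatMap fun B =>
    (B.Q.filter (fun q => decide (q ∉ B.F))).filterMap fun q =>
      match B.T q with
      | .sub k _ _ => some k
      | _ => none

/-- A la-NFA: all kind labels are look-around labels (for simplicity, only positive
look-ahead `pla` is treated). -/
def SubNFA.IsLaNFA [DecidableEq S] (A : SubNFA Sigma S) : Prop :=
  ∀ k ∈ A.kinds, k = Kind.pla

/-- An at-NFA: all kind labels are `at` (atomic grouping). -/
def SubNFA.IsAtNFA [DecidableEq S] (A : SubNFA Sigma S) : Prop :=
  ∀ k ∈ A.kinds, k = Kind.at

/-- A (la,at)-NFA in which (for simplicity) only the kinds `pla` and `at` occur. -/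
def SubNFA.IsLaAtNFA [DecidableEq S] (A : SubNFA Sigma S) : Prop :=
  ∀ k ∈ A.kinds, k = Kind.pla ∨ k = Kind.at

/-- One global ε-step of an NFA with sub-automata: an `Eps` or `Branch` transition, or a
`Sub` transition with a look-around kind (from the transition's source to its successor),
of a non-accepting top-level state of any component automaton. -/
def SubNFA.epsStep (A : SubNFA Sigma S) (q q' : S) : Prop :=
  ∃ B ∈ A.comps, q ∈ B.Q ∧ q ∉ B.F ∧
    (B.T q = SubTrans.eps q' ∨
     (∃ q'', B.T q = SubTrans.branch q' q'') ∨
     (∃ q'', B.T q = SubTrans.branch q'' q') ∨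
     (∃ k A'', B.T q = SubTrans.sub k A'' q' ∧ k ≠ Kind.at))

/-- The NFA with sub-automata has no ε-loops. -/
def SubNFA.NoEpsLoops (A : SubNFA Sigma S) : Prop :=
  ∀ q : S, ¬ Relation.TransGen A.epsStep q q

/-- All pairs (state, transition) of non-accepting top-level states of all component
automata of `A`. -/
def SubNFA.allTransNF [DecidableEq S] (A : SubNFA Sigma S) : List (S × SubTrans Sigma S) :=
  A.comps.flatMap fun B => (B.Q.filter (fun q => decide (q ∉ B.F))).map fun q => (q, B.T q)

/-- How many of the buckets in the definition of the in-degree of `q` a given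
transition contributes to. -/
def SubTrans.hits [DecidableEq S] (t : SubTrans Sigma S) (q : S) : ℕ :=
  match t with
  | .eps q' => if q' = q then 1 else 0
  | .char _ q' => if q' = q then 1 else 0
  | .branch q' q'' => (if q' = q then 1 else 0) + (if q'' = q then 1 else 0)
  | .sub _ _ q' => if q' = q then 1 else 0

/-- The in-degree `#in(q)` of a state of an NFA with sub-automata. -/
def SubNFA.inDeg [DecidableEq S] (A : SubNFA Sigma S) (q : S) : ℕ :=
  (A.allTransNF.map (fun p => p.2.hits q)).sum +
  (if q ∈ A.comps.map SubNFA.q0 then 1 else 0)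

/-- The maximal in-degree `#in(A)`. -/
def SubNFA.inDegMax [DecidableEq S] (A : SubNFA Sigma S) : ℕ :=
  (A.allStates.map A.inDeg).foldr max 0

/-! ## run elements for `Memo-la` and `Match-(la,at)` -/

/-- Elements of runs of `Memo-la` (and of `Match-(la,at)`): calls `C(q,i)`,
memoization-table invocations `M(q,i)`, and the results `S(i')`, `S'` (bare success),
and `F`. -/
inductive LaRunElem (S : Type) : Type where
  | call : S → ℕ → LaRunElem S
  | memo : S → ℕ → LaRunElem S
  | succAt : ℕ → LaRunElem S
  | succ : LaRunElem S
  | fail : LaRunElem S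
deriving DecidableEq

def LaRunElem.isRet : LaRunElem S → Bool
  | .succAt _ => true
  | .succ => true
  | .fail => true
  | _ => false

def LaRunElem.isCall : LaRunElem S → Bool
  | .call _ _ => true
  | .memo _ _ => true
  | _ => false

def laMemoToCall : LaRunElem S → Option (LaRunElem S)
  | .memo q i => some (.call q i)
  | _ => none

def Result.laElem {S : Type} : Result → LaRunElem S
  | .successAt i => .succAt i
  | .failure => .fail

/-! ## The backtracking matching algorithm `Match-(la,at)` -/

/-- Big-step semantics (with produced run) of the backtracking matching algorithm
`Match-(la,at)` for NFAs with sub-automata: `LAMatchRun w A q i r s` means the call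
`Match-(la,at)_{A,w}(q, i)` terminates with result `r` and produces the run `s`.
For simplicity, only the look-around kind `pla` (besides `at`) is treated. -/
inductive LAMatchRun (w : List Sigma) :
    SubNFA Sigma S → S → ℕ → Result → List (LaRunElem S) → Prop where
  | accept {A : SubNFA Sigma S} {q : S} {i : ℕ} : q ∈ A.F →
      LAMatchRun w A q i (.successAt i) [.call q i, .succAt i]
  | eps {A : SubNFA Sigma S} {q q' : S} {i : ℕ} {r : Result} {s : List (LaRunElem S)} :
      q ∉ A.F → A.T q = SubTrans.eps q' →
      LAMatchRun w A q' i r s →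
      LAMatchRun w A q i r (.call q i :: s ++ [r.laElem])
  | branchSucc {A : SubNFA Sigma S} {q q' q'' : S} {i i' : ℕ} {s : List (LaRunElem S)} :
      q ∉ A.F → A.T q = SubTrans.branch q' q'' →
      LAMatchRun w A q' i (.successAt i') s →
      LAMatchRun w A q i (.successAt i') (.call q i :: s ++ [LaRunElem.succAt i'])
  | branchFail {A : SubNFA Sigma S} {q q' q'' : S} {i : ℕ} {r : Result}
      {s s' : List (LaRunElem S)} :
      q ∉ A.F → A.T q = SubTrans.branch q' q'' →
      LAMatchRun w A q' i .failure s →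
      LAMatchRun w A q'' i r s' →
      LAMatchRun w A q i r (.call q i :: s ++ s' ++ [r.laElem])
  | charSucc {A : SubNFA Sigma S} {q q' : S} {σ : Sigma} {i : ℕ} {r : Result}
      {s : List (LaRunElem S)} :
      q ∉ A.F → A.T q = SubTrans.char σ q' →
      w[i]? = some σ →
      LAMatchRun w A q' (i + 1) r s →
      LAMatchRun w A q i r (.call q i :: s ++ [r.laElem])
  | charFail {A : SubNFA Sigma S} {q q' : S} {σ : Sigma} {i : ℕ} :
      q ∉ A.F → A.T q = SubTrans.char σ q' →
      w[i]? ≠ some σ →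
      LAMatchRun w A q i .failure [.call q i, .fail]
  | plaSucc {A A' : SubNFA Sigma S} {q q' : S} {i i' : ℕ} {r : Result}
      {s1 s2 : List (LaRunElem S)} :
      q ∉ A.F → A.T q = SubTrans.sub Kind.pla A' q' →
      LAMatchRun w A' A'.q0 i (.successAt i') s1 →
      LAMatchRun w A q' i r s2 →
      LAMatchRun w A q i r (.call q i :: s1 ++ s2 ++ [r.laElem])
  | plaFail {A A' : SubNFA Sigma S} {q q' : S} {i : ℕ} {s1 : List (LaRunElem S)} :
      q ∉ A.F → A.T q = SubTrans.sub Kind.pla A' q' →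
      LAMatchRun w A' A'.q0 i .failure s1 →
      LAMatchRun w A q i .failure (.call q i :: s1 ++ [LaRunElem.fail])
  | atSucc {A A' : SubNFA Sigma S} {q q' : S} {i i' : ℕ} {r : Result}
      {s1 s2 : List (LaRunElem S)} :
      q ∉ A.F → A.T q = SubTrans.sub Kind.at A' q' →
      LAMatchRun w A' A'.q0 i (.successAt i') s1 →
      LAMatchRun w A q' i' r s2 →
      LAMatchRun w A q i r (.call q i :: s1 ++ s2 ++ [r.laElem])
  | atFail {A A' : SubNFA Sigma S} {q q' : S} {i : ℕ} {s1 : List (LaRunElem S)} :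
      q ∉ A.F → A.T q = SubTrans.sub Kind.at A' q' →
      LAMatchRun w A' A'.q0 i .failure s1 →
      LAMatchRun w A q i .failure (.call q i :: s1 ++ [LaRunElem.fail])

/-! ## `Memo-la` -/

/-- Values of the memoization table of `Memo-la`: `Failure` or `Success`. -/
inductive LaVal : Type where
  | success : LaVal
  | failure : LaVal
deriving DecidableEq

/-- Results of `Memo-la`: `SuccessAt i'`, bare `Success`, or `Failure`. -/
inductive LaResult : Type where
  | successAt : ℕ → LaResult
  | success : LaResult
  | failure : LaResult
deriving DecidableEq

def LaVal.toResult : LaVal → LaResult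
  | .success => .success
  | .failure => .failure

def LaResult.elem {S : Type} : LaResult → LaRunElem S
  | .successAt i => .succAt i
  | .success => .succ
  | .failure => .fail

def Result.toLa : Result → LaResult
  | .successAt i => .successAt i
  | .failure => .failure

/-- The final recording of `Memo-la`: `M(q,i) := Success` if the result is
`SuccessAt i'` or `Success`, and `M(q,i) := Failure` if the result is `Failure`. -/
def laRecord [DecidableEq S] (M : S × ℕ → Option LaVal) (q : S) (i : ℕ) (r : LaResult) :
    S × ℕ → Option LaVal :=
  fun p => if p = (q, i) then
    some (match r with | .failure => LaVal.failure | _ => LaVal.success)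
  else M p

/-- Big-step semantics (with resulting memoization table and produced run) of the
memoized backtracking matching algorithm `Memo-la` for la-NFAs:
`MemoLaRun w A q i M M' r s` means the call `Memo-la^M_{A,w}(q, i)` terminates with
result `r`, final memoization table `M'`, and produces the run `s`. The memoization
table is shared between the top-level automaton and all sub-automata. -/
inductive MemoLaRun [DecidableEq S] (w : List Sigma) :
    SubNFA Sigma S → S → ℕ → (S × ℕ → Option LaVal) → (S × ℕ → Option LaVal) →
    LaResult → List (LaRunElem S) → Prop where
  | memoHit {A : SubNFA Sigma S} {q : S} {i : ℕ} {M : S × ℕ → Option LaVal} {v : LaVal} :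
      M (q, i) = some v →
      MemoLaRun w A q i M M v.toResult [.memo q i, v.toResult.elem]
  | accept {A : SubNFA Sigma S} {q : S} {i : ℕ} {M : S × ℕ → Option LaVal} :
      M (q, i) = none → q ∈ A.F →
      MemoLaRun w A q i M (laRecord M q i (.successAt i)) (.successAt i)
        [.call q i, .succAt i]
  | eps {A : SubNFA Sigma S} {q q' : S} {i : ℕ} {M M' : S × ℕ → Option LaVal}
      {r : LaResult} {s : List (LaRunElem S)} :
      M (q, i) = none → q ∉ A.F → A.T q = SubTrans.eps q' →
      MemoLaRun w A q' i M M' r s →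
      MemoLaRun w A q i M (laRecord M' q i r) r (.call q i :: s ++ [r.elem])
  | branchNoFail {A : SubNFA Sigma S} {q q' q'' : S} {i : ℕ}
      {M M' : S × ℕ → Option LaVal} {r : LaResult} {s : List (LaRunElem S)} :
      M (q, i) = none → q ∉ A.F → A.T q = SubTrans.branch q' q'' →
      MemoLaRun w A q' i M M' r s → r ≠ .failure →
      MemoLaRun w A q i M (laRecord M' q i r) r (.call q i :: s ++ [r.elem])
  | branchFail {A : SubNFA Sigma S} {q q' q'' : S} {i : ℕ}
      {M M1 M2 : S × ℕ → Option LaVal} {r : LaResult} {s1 s2 : List (LaRunElem S)} :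
      M (q, i) = none → q ∉ A.F → A.T q = SubTrans.branch q' q'' →
      MemoLaRun w A q' i M M1 .failure s1 →
      MemoLaRun w A q'' i M1 M2 r s2 →
      MemoLaRun w A q i M (laRecord M2 q i r) r (.call q i :: s1 ++ s2 ++ [r.elem])
  | charSucc {A : SubNFA Sigma S} {q q' : S} {σ : Sigma} {i : ℕ}
      {M M' : S × ℕ → Option LaVal} {r : LaResult} {s : List (LaRunElem S)} :
      M (q, i) = none → q ∉ A.F → A.T q = SubTrans.char σ q' →
      w[i]? = some σ →
      MemoLaRun w A q' (i + 1) M M' r s →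
      MemoLaRun w A q i M (laRecord M' q i r) r (.call q i :: s ++ [r.elem])
  | charFail {A : SubNFA Sigma S} {q q' : S} {σ : Sigma} {i : ℕ}
      {M : S × ℕ → Option LaVal} :
      M (q, i) = none → q ∉ A.F → A.T q = SubTrans.char σ q' →
      w[i]? ≠ some σ →
      MemoLaRun w A q i M (laRecord M q i .failure) .failure [.call q i, .fail]
  | plaSucc {A A' : SubNFA Sigma S} {q q' : S} {i : ℕ}
      {M M1 M2 : S × ℕ → Option LaVal} {r1 r : LaResult} {s1 s2 : List (LaRunElem S)} :
      M (q, i) = none → q ∉ A.F → A.T q = SubTrans.sub Kind.pla A' q' →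
      MemoLaRun w A' A'.q0 i M M1 r1 s1 → r1 ≠ .failure →
      MemoLaRun w A q' i M1 M2 r s2 →
      MemoLaRun w A q i M (laRecord M2 q i r) r (.call q i :: s1 ++ s2 ++ [r.elem])
  | plaFail {A A' : SubNFA Sigma S} {q q' : S} {i : ℕ}
      {M M1 : S × ℕ → Option LaVal} {s1 : List (LaRunElem S)} :
      M (q, i) = none → q ∉ A.F → A.T q = SubTrans.sub Kind.pla A' q' →
      MemoLaRun w A' A'.q0 i M M1 .failure s1 →
      MemoLaRun w A q i M (laRecord M1 q i .failure) .failure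
        (.call q i :: s1 ++ [LaRunElem.fail])

/-! ## `Memo-at` -/

/-- Results of `Memo-at`: `SuccessAt(i', K)` with a set `K` of delayed memoization keys,
or `Failure(j)` with a nesting depth `j`. -/
inductive AtResult (S : Type) : Type where
  | successAt : ℕ → Finset (S × ℕ) → AtResult S
  | failure : ℕ → AtResult S

/-- Elements of runs of `Memo-at`: calls `C(q,i)`, memoization-table invocations
`M(q,i)`, and results `S(i')` and `F(j)`. -/
inductive AtRunElem (S : Type) : Type where
  | call : S → ℕ → AtRunElem S
  | memo : S → ℕ → AtRunElem S
  | succ : ℕ → AtRunElem S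
  | fail : ℕ → AtRunElem S
deriving DecidableEq

def AtRunElem.isRet : AtRunElem S → Bool
  | .succ _ => true
  | .fail _ => true
  | _ => false

def AtRunElem.isCall : AtRunElem S → Bool
  | .call _ _ => true
  | .memo _ _ => true
  | _ => false

def atMemoToCall : AtRunElem S → Option (AtRunElem S)
  | .memo q i => some (.call q i)
  | _ => none

def AtResult.elem {S : Type} : AtResult S → AtRunElem S
  | .successAt i _ => .succ i
  | .failure j => .fail j

/-- `f`, converting results of `Memo-at` to results of `Match-(la,at)`. -/
def AtResult.toResult {S : Type} : AtResult S → Result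
  | .successAt i _ => .successAt i
  | .failure _ => .failure

/-- The final step of `Memo-at`: on success, the key `(q,i)` is added to the set of
delayed keys. -/
def atFinal [DecidableEq S] (q : S) (i : ℕ) : AtResult S → AtResult S
  | .successAt i' K => .successAt i' (insert (q, i) K)
  | .failure j => .failure j

/-- The final recording of `Memo-at`: `M(q,i) := Failure(j)` if the result is
`Failure(j)`. -/
def atRecord [DecidableEq S] (M : S × ℕ → Option ℕ) (q : S) (i : ℕ) :
    AtResult S → (S × ℕ → Option ℕ)
  | .failure j => fun p => if p = (q, i) then some j else M p
  | _ => M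

/-- Batch recording `M(k) := Failure(j)` for every `k ∈ K`. -/
def atBatch [DecidableEq S] (M : S × ℕ → Option ℕ) (K : Finset (S × ℕ)) (j : ℕ) :
    S × ℕ → Option ℕ :=
  fun p => if p ∈ K then some j else M p

/-- Big-step semantics (with resulting memoization table and produced run) of the
memoized backtracking matching algorithm `Memo-at` for at-NFAs:
`MemoAtRun A0 w A q i M M' r s` means the call `Memo-at^M_{A0,A,w}(q, i)` (with the
whole automaton `A0` and current sub-automaton `A`) terminates with result `r`, final
memoization table `M'`, and produces the run `s`. -/
inductive MemoAtRun [DecidableEq S] (A0 : SubNFA Sigma S) (w : List Sigma) :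
    SubNFA Sigma S → S → ℕ → (S × ℕ → Option ℕ) → (S × ℕ → Option ℕ) →
    AtResult S → List (AtRunElem S) → Prop where
  | memoHit {A : SubNFA Sigma S} {q : S} {i j : ℕ} {M : S × ℕ → Option ℕ} :
      M (q, i) = some j →
      MemoAtRun A0 w A q i M M (.failure j) [.memo q i, .fail j]
  | accept {A : SubNFA Sigma S} {q : S} {i : ℕ} {M : S × ℕ → Option ℕ} :
      M (q, i) = none → q ∈ A.F →
      MemoAtRun A0 w A q i M M (.successAt i {(q, i)}) [.call q i, .succ i]
  | eps {A : SubNFA Sigma S} {q q' : S} {i : ℕ} {M M' : S × ℕ → Option ℕ}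
      {r : AtResult S} {s : List (AtRunElem S)} :
      M (q, i) = none → q ∉ A.F → A.T q = SubTrans.eps q' →
      MemoAtRun A0 w A q' i M M' r s →
      MemoAtRun A0 w A q i M (atRecord M' q i r) (atFinal q i r)
        (.call q i :: s ++ [r.elem])
  | branchNoBT {A : SubNFA Sigma S} {q q' q'' : S} {i : ℕ} {M M' : S × ℕ → Option ℕ}
      {r : AtResult S} {s : List (AtRunElem S)} :
      M (q, i) = none → q ∉ A.F → A.T q = SubTrans.branch q' q'' →
      MemoAtRun A0 w A q' i M M' r s →
      (∀ j, r = AtResult.failure j → j ≠ A0.nu q) →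
      MemoAtRun A0 w A q i M (atRecord M' q i r) (atFinal q i r)
        (.call q i :: s ++ [r.elem])
  | branchBTSucc {A : SubNFA Sigma S} {q q' q'' : S} {i i'' : ℕ} {K : Finset (S × ℕ)}
      {M M1 M2 : S × ℕ → Option ℕ} {s1 s2 : List (AtRunElem S)} :
      M (q, i) = none → q ∉ A.F → A.T q = SubTrans.branch q' q'' →
      MemoAtRun A0 w A q' i M M1 (.failure (A0.nu q)) s1 →
      MemoAtRun A0 w A q'' i M1 M2 (.successAt i'' K) s2 →
      MemoAtRun A0 w A q i M M2 (atFinal q i (.successAt i'' K))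
        (.call q i :: s1 ++ s2 ++ [AtRunElem.succ i''])
  | branchBTFail {A : SubNFA Sigma S} {q q' q'' : S} {i j' : ℕ}
      {M M1 M2 : S × ℕ → Option ℕ} {s1 s2 : List (AtRunElem S)} :
      M (q, i) = none → q ∉ A.F → A.T q = SubTrans.branch q' q'' →
      MemoAtRun A0 w A q' i M M1 (.failure (A0.nu q)) s1 →
      MemoAtRun A0 w A q'' i M1 M2 (.failure j') s2 →
      MemoAtRun A0 w A q i M (atRecord M2 q i (.failure (min (A0.nu q) j')))
        (.failure (min (A0.nu q) j'))
        (.call q i :: s1 ++ s2 ++ [AtRunElem.fail (min (A0.nu q) j')])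
  | charSucc {A : SubNFA Sigma S} {q q' : S} {σ : Sigma} {i : ℕ}
      {M M' : S × ℕ → Option ℕ} {r : AtResult S} {s : List (AtRunElem S)} :
      M (q, i) = none → q ∉ A.F → A.T q = SubTrans.char σ q' →
      w[i]? = some σ →
      MemoAtRun A0 w A q' (i + 1) M M' r s →
      MemoAtRun A0 w A q i M (atRecord M' q i r) (atFinal q i r)
        (.call q i :: s ++ [r.elem])
  | charFail {A : SubNFA Sigma S} {q q' : S} {σ : Sigma} {i : ℕ}
      {M : S × ℕ → Option ℕ} :
      M (q, i) = none → q ∉ A.F → A.T q = SubTrans.char σ q' →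
      w[i]? ≠ some σ →
      MemoAtRun A0 w A q i M (atRecord M q i (.failure (A0.nu q)))
        (.failure (A0.nu q)) [.call q i, .fail (A0.nu q)]
  | subSuccSucc {A A' : SubNFA Sigma S} {q q' : S} {i i' i'' : ℕ}
      {K' K'' : Finset (S × ℕ)} {M M1 M2 : S × ℕ → Option ℕ}
      {s1 s2 : List (AtRunElem S)} :
      M (q, i) = none → q ∉ A.F → A.T q = SubTrans.sub Kind.at A' q' →
      MemoAtRun A0 w A' A'.q0 i M M1 (.successAt i' K') s1 →
      MemoAtRun A0 w A q' i' M1 M2 (.successAt i'' K'') s2 →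
      MemoAtRun A0 w A q i M M2 (atFinal q i (.successAt i'' (K' ∪ K'')))
        (.call q i :: s1 ++ s2 ++ [AtRunElem.succ i''])
  | subSuccFail {A A' : SubNFA Sigma S} {q q' : S} {i i' j : ℕ} {K' : Finset (S × ℕ)}
      {M M1 M2 : S × ℕ → Option ℕ} {s1 s2 : List (AtRunElem S)} :
      M (q, i) = none → q ∉ A.F → A.T q = SubTrans.sub Kind.at A' q' →
      MemoAtRun A0 w A' A'.q0 i M M1 (.successAt i' K') s1 →
      MemoAtRun A0 w A q' i' M1 M2 (.failure j) s2 →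
      MemoAtRun A0 w A q i M (atRecord (atBatch M2 K' j) q i (.failure j)) (.failure j)
        (.call q i :: s1 ++ s2 ++ [AtRunElem.fail j])
  | subFailHigh {A A' : SubNFA Sigma S} {q q' : S} {i j : ℕ}
      {M M1 : S × ℕ → Option ℕ} {s1 : List (AtRunElem S)} :
      M (q, i) = none → q ∉ A.F → A.T q = SubTrans.sub Kind.at A' q' →
      MemoAtRun A0 w A' A'.q0 i M M1 (.failure j) s1 →
      A0.nu q < j →
      MemoAtRun A0 w A q i M (atRecord M1 q i (.failure (A0.nu q)))
        (.failure (A0.nu q)) (.call q i :: s1 ++ [AtRunElem.fail (A0.nu q)])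
  | subFailLow {A A' : SubNFA Sigma S} {q q' : S} {i j : ℕ}
      {M M1 : S × ℕ → Option ℕ} {s1 : List (AtRunElem S)} :
      M (q, i) = none → q ∉ A.F → A.T q = SubTrans.sub Kind.at A' q' →
      MemoAtRun A0 w A' A'.q0 i M M1 (.failure j) s1 →
      j ≤ A0.nu q →
      MemoAtRun A0 w A q i M (atRecord M1 q i (.failure j)) (.failure j)
        (.call q i :: s1 ++ [AtRunElem.fail j])

/-! ## The combined algorithm `Memo-(la,at)` -/

/-- Values of the memoization table of `Memo-(la,at)`: `Success` or `Failure(j)`. -/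
inductive LaAtVal : Type where
  | success : LaAtVal
  | failure : ℕ → LaAtVal

/-- Results of `Memo-(la,at)`: `SuccessAt(i', K)`, bare `Success`, or `Failure(j)`. -/
inductive LaAtResult (S : Type) : Type where
  | successAt : ℕ → Finset (S × ℕ) → LaAtResult S
  | success : LaAtResult S
  | failure : ℕ → LaAtResult S

def LaAtVal.toResult {S : Type} : LaAtVal → LaAtResult S
  | .success => .success
  | .failure j => .failure j

/-- `f`, converting results of `Memo-(la,at)` to results of `Match-(la,at)`
(undefined on the bare value `Success`). -/
def LaAtResult.toResult? {S : Type} : LaAtResult S → Option Result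
  | .successAt i _ => some (.successAt i)
  | .success => none
  | .failure _ => some .failure

def laAtFinal [DecidableEq S] (q : S) (i : ℕ) : LaAtResult S → LaAtResult S
  | .successAt i' K => .successAt i' (insert (q, i) K)
  | r => r

def laAtRecord [DecidableEq S] (M : S × ℕ → Option LaAtVal) (q : S) (i : ℕ) :
    LaAtResult S → (S × ℕ → Option LaAtVal)
  | .successAt _ _ => M
  | .success => fun p => if p = (q, i) then some LaAtVal.success else M p
  | .failure j => fun p => if p = (q, i) then some (LaAtVal.failure j) else M p

def laAtBatch [DecidableEq S] (M : S × ℕ → Option LaAtVal) (K : Finset (S × ℕ))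
    (v : LaAtVal) : S × ℕ → Option LaAtVal :=
  fun p => if p ∈ K then some v else M p

/-- Big-step semantics (with resulting memoization table and the number of recursive
calls made) of the combined memoized backtracking matching algorithm `Memo-(la,at)`:
`MemoLaAtRun w A0 A q i M M' r n` means the call `Memo-(la,at)^M_{A0,A,w}(q, i)`
terminates with result `r`, final memoization table `M'`, making `n` calls in total.
On a positive look-ahead transition, the sub-automaton becomes the new whole automaton
(so nesting depths of atomic grouping are reset by look-around operators). -/
inductive MemoLaAtRun [DecidableEq S] (w : List Sigma) :
    SubNFA Sigma S → SubNFA Sigma S → S → ℕ →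
    (S × ℕ → Option LaAtVal) → (S × ℕ → Option LaAtVal) → LaAtResult S → ℕ → Prop where
  | memoHit {A0 A : SubNFA Sigma S} {q : S} {i : ℕ} {M : S × ℕ → Option LaAtVal}
      {v : LaAtVal} :
      M (q, i) = some v →
      MemoLaAtRun w A0 A q i M M v.toResult 1
  | accept {A0 A : SubNFA Sigma S} {q : S} {i : ℕ} {M : S × ℕ → Option LaAtVal} :
      M (q, i) = none → q ∈ A.F →
      MemoLaAtRun w A0 A q i M M (.successAt i {(q, i)}) 1
  | eps {A0 A : SubNFA Sigma S} {q q' : S} {i : ℕ} {M M' : S × ℕ → Option LaAtVal}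
      {r : LaAtResult S} {n : ℕ} :
      M (q, i) = none → q ∉ A.F → A.T q = SubTrans.eps q' →
      MemoLaAtRun w A0 A q' i M M' r n →
      MemoLaAtRun w A0 A q i M (laAtRecord M' q i (laAtFinal q i r)) (laAtFinal q i r)
        (n + 1)
  | branchNoBT {A0 A : SubNFA Sigma S} {q q' q'' : S} {i : ℕ}
      {M M' : S × ℕ → Option LaAtVal} {r : LaAtResult S} {n : ℕ} :
      M (q, i) = none → q ∉ A.F → A.T q = SubTrans.branch q' q'' →
      MemoLaAtRun w A0 A q' i M M' r n →
      (∀ j, r = LaAtResult.failure j → j ≠ A0.nu q) →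
      MemoLaAtRun w A0 A q i M (laAtRecord M' q i (laAtFinal q i r)) (laAtFinal q i r)
        (n + 1)
  | branchBTFail {A0 A : SubNFA Sigma S} {q q' q'' : S} {i j' : ℕ}
      {M M1 M2 : S × ℕ → Option LaAtVal} {n1 n2 : ℕ} :
      M (q, i) = none → q ∉ A.F → A.T q = SubTrans.branch q' q'' →
      MemoLaAtRun w A0 A q' i M M1 (.failure (A0.nu q)) n1 →
      MemoLaAtRun w A0 A q'' i M1 M2 (.failure j') n2 →
      MemoLaAtRun w A0 A q i M
        (laAtRecord M2 q i (.failure (min (A0.nu q) j')))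
        (.failure (min (A0.nu q) j')) (n1 + n2 + 1)
  | branchBTOther {A0 A : SubNFA Sigma S} {q q' q'' : S} {i : ℕ}
      {M M1 M2 : S × ℕ → Option LaAtVal} {r : LaAtResult S} {n1 n2 : ℕ} :
      M (q, i) = none → q ∉ A.F → A.T q = SubTrans.branch q' q'' →
      MemoLaAtRun w A0 A q' i M M1 (.failure (A0.nu q)) n1 →
      MemoLaAtRun w A0 A q'' i M1 M2 r n2 →
      (∀ j, r ≠ LaAtResult.failure j) →
      MemoLaAtRun w A0 A q i M (laAtRecord M2 q i (laAtFinal q i r)) (laAtFinal q i r)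
        (n1 + n2 + 1)
  | charSucc {A0 A : SubNFA Sigma S} {q q' : S} {σ : Sigma} {i : ℕ}
      {M M' : S × ℕ → Option LaAtVal} {r : LaAtResult S} {n : ℕ} :
      M (q, i) = none → q ∉ A.F → A.T q = SubTrans.char σ q' →
      w[i]? = some σ →
      MemoLaAtRun w A0 A q' (i + 1) M M' r n →
      MemoLaAtRun w A0 A q i M (laAtRecord M' q i (laAtFinal q i r)) (laAtFinal q i r)
        (n + 1)
  | charFail {A0 A : SubNFA Sigma S} {q q' : S} {σ : Sigma} {i : ℕ}
      {M : S × ℕ → Option LaAtVal} :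
      M (q, i) = none → q ∉ A.F → A.T q = SubTrans.char σ q' →
      w[i]? ≠ some σ →
      MemoLaAtRun w A0 A q i M (laAtRecord M q i (.failure (A0.nu q)))
        (.failure (A0.nu q)) 1
  | plaSuccAt {A0 A A' : SubNFA Sigma S} {q q' : S} {i i' : ℕ} {K' : Finset (S × ℕ)}
      {M M1 M2 : S × ℕ → Option LaAtVal} {r : LaAtResult S} {n1 n2 : ℕ} :
      M (q, i) = none → q ∉ A.F → A.T q = SubTrans.sub Kind.pla A' q' →
      MemoLaAtRun w A' A' A'.q0 i M M1 (.successAt i' K') n1 →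
      MemoLaAtRun w A0 A q' i (laAtBatch M1 K' LaAtVal.success) M2 r n2 →
      MemoLaAtRun w A0 A q i M (laAtRecord M2 q i (laAtFinal q i r)) (laAtFinal q i r)
        (n1 + n2 + 1)
  | plaBare {A0 A A' : SubNFA Sigma S} {q q' : S} {i : ℕ}
      {M M1 M2 : S × ℕ → Option LaAtVal} {r : LaAtResult S} {n1 n2 : ℕ} :
      M (q, i) = none → q ∉ A.F → A.T q = SubTrans.sub Kind.pla A' q' →
      MemoLaAtRun w A' A' A'.q0 i M M1 .success n1 →
      MemoLaAtRun w A0 A q' i M1 M2 r n2 →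
      MemoLaAtRun w A0 A q i M (laAtRecord M2 q i (laAtFinal q i r)) (laAtFinal q i r)
        (n1 + n2 + 1)
  | plaFail {A0 A A' : SubNFA Sigma S} {q q' : S} {i j : ℕ}
      {M M1 : S × ℕ → Option LaAtVal} {n1 : ℕ} :
      M (q, i) = none → q ∉ A.F → A.T q = SubTrans.sub Kind.pla A' q' →
      MemoLaAtRun w A' A' A'.q0 i M M1 (.failure j) n1 →
      MemoLaAtRun w A0 A q i M (laAtRecord M1 q i (.failure (A0.nu q)))
        (.failure (A0.nu q)) (n1 + 1)
  | atSuccSucc {A0 A A' : SubNFA Sigma S} {q q' : S} {i i' i'' : ℕ}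
      {K' K'' : Finset (S × ℕ)} {M M1 M2 : S × ℕ → Option LaAtVal} {n1 n2 : ℕ} :
      M (q, i) = none → q ∉ A.F → A.T q = SubTrans.sub Kind.at A' q' →
      MemoLaAtRun w A0 A' A'.q0 i M M1 (.successAt i' K') n1 →
      MemoLaAtRun w A0 A q' i' M1 M2 (.successAt i'' K'') n2 →
      MemoLaAtRun w A0 A q i M M2
        (laAtFinal q i (.successAt i'' (K' ∪ K''))) (n1 + n2 + 1)
  | atSuccBare {A0 A A' : SubNFA Sigma S} {q q' : S} {i i' : ℕ} {K' : Finset (S × ℕ)}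
      {M M1 M2 : S × ℕ → Option LaAtVal} {n1 n2 : ℕ} :
      M (q, i) = none → q ∉ A.F → A.T q = SubTrans.sub Kind.at A' q' →
      MemoLaAtRun w A0 A' A'.q0 i M M1 (.successAt i' K') n1 →
      MemoLaAtRun w A0 A q' i' M1 M2 .success n2 →
      MemoLaAtRun w A0 A q i M
        (laAtRecord (laAtBatch M2 K' LaAtVal.success) q i .success) .success
        (n1 + n2 + 1)
  | atSuccFail {A0 A A' : SubNFA Sigma S} {q q' : S} {i i' j : ℕ} {K' : Finset (S × ℕ)}
      {M M1 M2 : S × ℕ → Option LaAtVal} {n1 n2 : ℕ} :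
      M (q, i) = none → q ∉ A.F → A.T q = SubTrans.sub Kind.at A' q' →
      MemoLaAtRun w A0 A' A'.q0 i M M1 (.successAt i' K') n1 →
      MemoLaAtRun w A0 A q' i' M1 M2 (.failure j) n2 →
      MemoLaAtRun w A0 A q i M
        (laAtRecord (laAtBatch M2 K' (LaAtVal.failure j)) q i (.failure j))
        (.failure j) (n1 + n2 + 1)
  | atBare {A0 A A' : SubNFA Sigma S} {q q' : S} {i : ℕ}
      {M M1 : S × ℕ → Option LaAtVal} {n1 : ℕ} :
      M (q, i) = none → q ∉ A.F → A.T q = SubTrans.sub Kind.at A' q' →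
      MemoLaAtRun w A0 A' A'.q0 i M M1 .success n1 →
      MemoLaAtRun w A0 A q i M (laAtRecord M1 q i .success) .success (n1 + 1)
  | atFailHigh {A0 A A' : SubNFA Sigma S} {q q' : S} {i j : ℕ}
      {M M1 : S × ℕ → Option LaAtVal} {n1 : ℕ} :
      M (q, i) = none → q ∉ A.F → A.T q = SubTrans.sub Kind.at A' q' →
      MemoLaAtRun w A0 A' A'.q0 i M M1 (.failure j) n1 →
      A0.nu q < j →
      MemoLaAtRun w A0 A q i M (laAtRecord M1 q i (.failure (A0.nu q)))
        (.failure (A0.nu q)) (n1 + 1)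
  | atFailLow {A0 A A' : SubNFA Sigma S} {q q' : S} {i j : ℕ}
      {M M1 : S × ℕ → Option LaAtVal} {n1 : ℕ} :
      M (q, i) = none → q ∉ A.F → A.T q = SubTrans.sub Kind.at A' q' →
      MemoLaAtRun w A0 A' A'.q0 i M M1 (.failure j) n1 →
      j ≤ A0.nu q →
      MemoLaAtRun w A0 A q i M (laAtRecord M1 q i (.failure j)) (.failure j) (n1 + 1)

/-!
Let `(q, i)` be visited by a run. Unless this is the visit that starts the run, it is caused by a
transition into `q` whose source was called at the matching position. No key is called twice: a
finished call is answered from the table from then on, and if a call reached its own key while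
still pending, every pending call between the two would wait for another pending one, so that the
evaluation could never end. Hence each transition into `q` accounts for at most one visit per
target, and the visits of `(q, i)` number at most `#in(q)`. The first of them is a call `C(q, i)`,
which leaves at most `#in(q) - 1` lookups `M(q, i)`.
-/

section AutomatonTree

/-- The sub-automaton labelling a transition, as a list of length at most one. -/
def SubTrans.subAuts : SubTrans Sigma S → List (SubNFA Sigma S)
  | .sub _ A' _ => [A']
  | _ => []

/-- The sub-automata labelling the transitions of the top-level states of `A`: the children of `A`
in the nesting tree of automata. As in `SubNFA.comps`, the (irrelevant) transitions of accepting
states are included. -/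
def SubNFA.children (A : SubNFA Sigma S) : List (SubNFA Sigma S) :=
  A.Q.flatMap fun q => (A.T q).subAuts

theorem SubNFA.children_induction {P : SubNFA Sigma S → Prop}
    (h : ∀ A, (∀ B ∈ A.children, P B) → P A) (A : SubNFA Sigma S) : P A := by
  refine SubNFA.rec (motive_1 := P) (motive_2 := fun t => ∀ B ∈ t.subAuts, P B)
    (fun Q q0 F T ih => h _ fun B hB => ?_) ?_ ?_ ?_ ?_ A
  · obtain ⟨q, -, hq⟩ := List.mem_flatMap.1 hB
    exact ih q B hq
  all_goals simp +contextual [SubTrans.subAuts]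

theorem SubTrans.map_fst_subCompsD (t : SubTrans Sigma S) :
    t.subCompsD.map Prod.fst = t.subAuts.flatMap SubNFA.comps := by
  cases t <;> simp [SubTrans.subCompsD, SubTrans.subAuts, SubNFA.comps, Function.comp_def]

theorem SubNFA.comps_eq_cons (A : SubNFA Sigma S) :
    A.comps = A :: A.children.flatMap SubNFA.comps := by
  rcases A with ⟨Q, q0, F, T⟩
  rw [SubNFA.comps, SubNFA.compsD, SubNFA.children, List.flatMap_assoc, List.map_cons,
    List.map_flatMap]
  simp only [SubTrans.map_fst_subCompsD, SubNFA.Q, SubNFA.T]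

theorem SubNFA.self_mem_comps (A : SubNFA Sigma S) : A ∈ A.comps := by
  simp [A.comps_eq_cons]

theorem SubNFA.comps_perm_cons_flatMap_children (A : SubNFA Sigma S) :
    A.comps.Perm (A :: A.comps.flatMap SubNFA.children) := by
  induction A using SubNFA.children_induction with
  | h A ih =>
    have key : (A.children.flatMap SubNFA.comps).Perm
        (A.children ++ A.children.flatMap fun B => B.comps.flatMap SubNFA.children) :=
      (List.Perm.flatMap_left _ ih).trans
        (by simpa using (List.map_append_flatMap_perm A.children id _).symm)
    simpa [A.comps_eq_cons, List.flatMap_assoc] using key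

theorem SubNFA.mem_comps_of_mem_children {A B C : SubNFA Sigma S} (hB : B ∈ A.comps)
    (hC : C ∈ B.children) : C ∈ A.comps :=
  A.comps_perm_cons_flatMap_children.mem_iff.2
    (List.mem_cons_of_mem _ (List.mem_flatMap.2 ⟨B, hB, hC⟩))

theorem SubNFA.mem_comps_of_T_eq_sub {A B A' : SubNFA Sigma S} {q q' : S} {k : Kind}
    (hB : B ∈ A.comps) (hq : q ∈ B.Q) (hT : B.T q = .sub k A' q') : A' ∈ A.comps :=
  SubNFA.mem_comps_of_mem_children hB
    (List.mem_flatMap.2 ⟨q, hq, by simp [hT, SubTrans.subAuts]⟩)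

theorem SubNFA.nodup_map_q0_comps {A : SubNFA Sigma S} (hA : A.WF) :
    (A.comps.map SubNFA.q0).Nodup := by
  have hdisj := (List.nodup_flatMap.1 hA.2).2
  exact List.pairwise_map.2 <| hdisj.imp_of_mem fun hB hC hBC h =>
    hBC (hA.1 _ hB).1 (h ▸ (hA.1 _ hC).1)

theorem SubNFA.eq_of_mem_Q {A B C : SubNFA Sigma S} {q : S} (hA : A.allStates.Nodup)
    (hB : B ∈ A.comps) (hC : C ∈ A.comps) (hqB : q ∈ B.Q) (hqC : q ∈ C.Q) : B = C := by
  have hdisj := (List.nodup_flatMap.1 hA).2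
  have hsymm : Std.Symm (Function.onFun List.Disjoint (SubNFA.Q (Sigma := Sigma) (S := S))) :=
    ⟨fun _ _ h => h.symm⟩
  by_contra hne
  exact hdisj.forall hB hC hne hqB hqC

end AutomatonTree

section Transitions

variable [DecidableEq S]

theorem SubNFA.mem_allTransNF {A B : SubNFA Sigma S} {q : S} {t : SubTrans Sigma S}
    (hB : B ∈ A.comps) (hq : q ∈ B.Q) (hF : q ∉ B.F) (hT : B.T q = t) : (q, t) ∈ A.allTransNF :=
  List.mem_flatMap.2 ⟨B, hB, List.mem_map.2 ⟨q, by simp [hq, hF], by rw [hT]⟩⟩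

theorem SubNFA.exists_of_mem_allTransNF {A : SubNFA Sigma S} {q : S} {t : SubTrans Sigma S}
    (h : (q, t) ∈ A.allTransNF) : ∃ B ∈ A.comps, q ∈ B.Q ∧ q ∉ B.F ∧ B.T q = t := by
  simp only [SubNFA.allTransNF, List.mem_flatMap, List.mem_map, List.mem_filter,
    decide_eq_true_eq, Prod.mk.injEq] at h
  obtain ⟨B, hB, q, ⟨hq, hF⟩, rfl, rfl⟩ := h
  exact ⟨B, hB, hq, hF, rfl⟩

theorem SubNFA.eq_T_of_mem_allTransNF {A B : SubNFA Sigma S} {q : S} {t : SubTrans Sigma S}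
    (hA : A.allStates.Nodup) (hB : B ∈ A.comps) (hq : q ∈ B.Q) (ht : (q, t) ∈ A.allTransNF) :
    q ∉ B.F ∧ t = B.T q := by
  obtain ⟨C, hC, hqC, hF, rfl⟩ := SubNFA.exists_of_mem_allTransNF ht
  obtain rfl := SubNFA.eq_of_mem_Q hA hB hC hq hqC
  exact ⟨hF, rfl⟩

theorem SubNFA.allTransNF_unique {A : SubNFA Sigma S} {q : S} {t t' : SubTrans Sigma S}
    (hA : A.allStates.Nodup) (ht : (q, t) ∈ A.allTransNF) (ht' : (q, t') ∈ A.allTransNF) :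
    t = t' := by
  obtain ⟨B, hB, hq, -, rfl⟩ := SubNFA.exists_of_mem_allTransNF ht
  exact (SubNFA.eq_T_of_mem_allTransNF hA hB hq ht').2.symm

/-- The number of ways in which taking the transition `t` enters `q`, the start of a sub-automaton
in `q` included; the in-degree counts the latter once per automaton instead. -/
def SubTrans.entries (t : SubTrans Sigma S) (q : S) : ℕ :=
  t.hits q + (t.subAuts.map SubNFA.q0).count q

theorem SubNFA.sum_count_subAuts_add_le {A : SubNFA Sigma S} (hA : A.WF) (q : S) :
    (A.allTransNF.map fun x => (x.2.subAuts.map SubNFA.q0).count q).sum +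
        (if A.q0 = q then 1 else 0) ≤
      if q ∈ A.comps.map SubNFA.q0 then 1 else 0 := by
  have hsub : (A.allTransNF.flatMap fun x => x.2.subAuts).Sublist
      (A.comps.flatMap SubNFA.children) := by
    rw [SubNFA.allTransNF, List.flatMap_assoc]
    refine List.Sublist.flatMap_right _ fun B _ => ?_
    rw [List.flatMap_map]
    exact List.filter_sublist.flatMap _
  calc
    _ = ((A.allTransNF.flatMap fun x => x.2.subAuts).map SubNFA.q0).count q +
        (if A.q0 = q then 1 else 0) := by
      rw [List.map_flatMap, List.count_flatMap]; rfl
    _ ≤ ((A.comps.flatMap SubNFA.children).map SubNFA.q0).count q +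
        (if A.q0 = q then 1 else 0) :=
      Nat.add_le_add_right ((hsub.map _).count_le q) _
    _ = (A.comps.map SubNFA.q0).count q := by
      rw [(A.comps_perm_cons_flatMap_children.map SubNFA.q0).count_eq q, List.map_cons,
        List.count_cons]
      simp only [beq_iff_eq]
    _ = _ := (SubNFA.nodup_map_q0_comps hA).count

theorem SubNFA.sum_entries_add_le_inDeg {A : SubNFA Sigma S} (hA : A.WF) (q : S) :
    (A.allTransNF.map fun x => x.2.entries q).sum + (if A.q0 = q then 1 else 0) ≤
      A.inDeg q := by
  simp only [SubTrans.entries, List.sum_map_add, SubNFA.inDeg, Nat.add_assoc]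
  exact Nat.add_le_add_left (SubNFA.sum_count_subAuts_add_le hA q) _

end Transitions

section CallTraces

/-- A memoization table of `Memo-la`. -/
abbrev LaTable (S : Type) : Type := S × ℕ → Option LaVal

/-- The table value recorded for a result. -/
def LaResult.val : LaResult → LaVal
  | .failure => .failure
  | _ => .success

theorem LaResult.val_eq_success {r : LaResult} (h : r ≠ .failure) : r.val = .success := by
  cases r <;> first | rfl | exact absurd rfl h

theorem filter_isCall_computed (q : S) (i : ℕ) (s : List (LaRunElem S)) (r : LaResult) :
    (LaRunElem.call q i :: s ++ [r.elem]).filter LaRunElem.isCall =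
      .call q i :: s.filter LaRunElem.isCall := by
  cases r <;> simp [List.filter_cons, LaRunElem.isCall, LaResult.elem]

open Classical in
/-- The key on which a non-accepting state with transition `t` first calls the algorithm at
position `j` of `w`, if any. -/
noncomputable def SubTrans.firstCall (w : List Sigma) (t : SubTrans Sigma S) (j : ℕ) :
    Option (S × ℕ) :=
  match t with
  | .eps q' => some (q', j)
  | .branch q' _ => some (q', j)
  | .char σ q' => if w[j]? = some σ then some (q', j + 1) else none
  | .sub _ A' _ => some (A'.q0, j)

/-- The key of the second call, if any, once the first one has returned `v`. -/
def SubTrans.secondCall (t : SubTrans Sigma S) (j : ℕ) (v : LaVal) : Option (S × ℕ) :=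
  match t, v with
  | .branch _ q'', .failure => some (q'', j)
  | .sub _ _ q', .success => some (q', j)
  | _, _ => none

variable [DecidableEq S]

theorem laRecord_eq_update (M : LaTable S) (q : S) (i : ℕ) (r : LaResult) :
    laRecord M q i r = Function.update M (q, i) (some r.val) := by
  funext x
  cases r <;> simp [laRecord, LaResult.val, Function.update_apply]

/-- A uniform view of the executions of `Memo-la` on the automata within `A`: the call on the key
`c` turns the table `M` into `M'`, has an outcome of table value `v`, and makes the calls and
lookups `s`. Return elements are left out of `s`, the outcome of a computed call is left
unconstrained, and the transition determines at most two successive subcalls. -/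
inductive CallTrace (A : SubNFA Sigma S) (w : List Sigma) :
    S × ℕ → LaTable S → LaTable S → LaVal → List (LaRunElem S) → Prop
  | hit {c : S × ℕ} {M : LaTable S} {v : LaVal} :
      M c = some v → CallTrace A w c M M v [.memo c.1 c.2]
  | leaf {c : S × ℕ} {M : LaTable S} (v : LaVal) :
      M c = none → (∀ t, (c.1, t) ∈ A.allTransNF → t.firstCall w c.2 = none) →
      CallTrace A w c M (Function.update M c (some v)) v [.call c.1 c.2]
  | one {c d : S × ℕ} {t : SubTrans Sigma S} {M M₁ : LaTable S} {v₁ : LaVal}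
      {s : List (LaRunElem S)} (v : LaVal) :
      M c = none → (c.1, t) ∈ A.allTransNF → t.firstCall w c.2 = some d →
      CallTrace A w d M M₁ v₁ s → t.secondCall c.2 v₁ = none →
      CallTrace A w c M (Function.update M₁ c (some v)) v (.call c.1 c.2 :: s)
  | two {c d₁ d₂ : S × ℕ} {t : SubTrans Sigma S} {M M₁ M₂ : LaTable S} {v₁ v₂ : LaVal}
      {s₁ s₂ : List (LaRunElem S)} (v : LaVal) :
      M c = none → (c.1, t) ∈ A.allTransNF → t.firstCall w c.2 = some d₁ →
      CallTrace A w d₁ M M₁ v₁ s₁ → t.secondCall c.2 v₁ = some d₂ →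
      CallTrace A w d₂ M₁ M₂ v₂ s₂ →
      CallTrace A w c M (Function.update M₂ c (some v)) v (.call c.1 c.2 :: (s₁ ++ s₂))

variable {A : SubNFA Sigma S} {w : List Sigma} {c : S × ℕ} {M M' : LaTable S} {v : LaVal}
  {s : List (LaRunElem S)}

theorem CallTrace.leaf_run {q : S} {i : ℕ} (r : LaResult) (hM : M (q, i) = none)
    (ht : ∀ t, (q, t) ∈ A.allTransNF → t.firstCall w i = none) :
    CallTrace A w (q, i) M (laRecord M q i r) r.val
      ([LaRunElem.call q i, r.elem].filter LaRunElem.isCall) := by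
  rw [laRecord_eq_update]
  cases r <;> exact .leaf _ hM ht

theorem CallTrace.one_run {q : S} {i : ℕ} {d : S × ℕ} {t : SubTrans Sigma S}
    {M₁ : LaTable S} {v₁ : LaVal} (r : LaResult) (hM : M (q, i) = none)
    (ht : (q, t) ∈ A.allTransNF) (hd : t.firstCall w i = some d)
    (h : CallTrace A w d M M₁ v₁ (s.filter LaRunElem.isCall)) (hv : t.secondCall i v₁ = none) :
    CallTrace A w (q, i) M (laRecord M₁ q i r) r.val
      ((LaRunElem.call q i :: s ++ [r.elem]).filter LaRunElem.isCall) := by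
  rw [laRecord_eq_update, filter_isCall_computed]
  exact .one _ hM ht hd h hv

theorem CallTrace.two_run {q : S} {i : ℕ} {d₁ d₂ : S × ℕ} {t : SubTrans Sigma S}
    {M₁ M₂ : LaTable S} {v₁ v₂ : LaVal} {s₁ s₂ : List (LaRunElem S)}
    (r : LaResult) (hM : M (q, i) = none) (ht : (q, t) ∈ A.allTransNF)
    (hd₁ : t.firstCall w i = some d₁)
    (h₁ : CallTrace A w d₁ M M₁ v₁ (s₁.filter LaRunElem.isCall))
    (hd₂ : t.secondCall i v₁ = some d₂)
    (h₂ : CallTrace A w d₂ M₁ M₂ v₂ (s₂.filter LaRunElem.isCall)) :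
    CallTrace A w (q, i) M (laRecord M₂ q i r) r.val
      ((LaRunElem.call q i :: s₁ ++ s₂ ++ [r.elem]).filter LaRunElem.isCall) := by
  rw [laRecord_eq_update, List.cons_append, filter_isCall_computed, List.filter_append]
  exact .two _ hM ht hd₁ h₁ hd₂ h₂

theorem MemoLaRun.callTrace (hA : A.WF) {B : SubNFA Sigma S} {p : S} {j : ℕ} {r : LaResult}
    (h : MemoLaRun w B p j M M' r s) (hB : B ∈ A.comps) (hp : p ∈ B.Q) :
    CallTrace A w (p, j) M M' r.val (s.filter LaRunElem.isCall) := by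
  induction h with
  | @memoHit _ _ _ _ v hM => cases v <;> exact .hit hM
  | accept hM hF =>
    exact .leaf_run _ hM fun t ht => absurd hF (SubNFA.eq_T_of_mem_allTransNF hA.2 hB hp ht).1
  | charFail hM _ hT hσ =>
    refine .leaf_run .failure hM fun t ht => ?_
    rw [(SubNFA.eq_T_of_mem_allTransNF hA.2 hB hp ht).2, hT]
    exact if_neg hσ
  | eps hM hF hT _ ih =>
    have hq' := by simpa only [hT] using (hA.1 _ hB).2.2 _ hp hF
    exact .one_run _ hM (SubNFA.mem_allTransNF hB hp hF hT) rfl (ih hB hq') rfl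
  | charSucc hM hF hT hσ _ ih =>
    have hq' := by simpa only [hT] using (hA.1 _ hB).2.2 _ hp hF
    exact .one_run _ hM (SubNFA.mem_allTransNF hB hp hF hT) (if_pos hσ) (ih hB hq') rfl
  | branchNoFail hM hF hT _ hr ih =>
    have hq' := by simpa only [hT] using (hA.1 _ hB).2.2 _ hp hF
    exact .one_run _ hM (SubNFA.mem_allTransNF hB hp hF hT) rfl (ih hB hq'.1)
      (LaResult.val_eq_success hr ▸ rfl)
  | branchFail hM hF hT _ _ ih₁ ih₂ =>
    have hq' := by simpa only [hT] using (hA.1 _ hB).2.2 _ hp hF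
    exact .two_run _ hM (SubNFA.mem_allTransNF hB hp hF hT) rfl (ih₁ hB hq'.1) rfl
      (ih₂ hB hq'.2)
  | plaFail hM hF hT _ ih =>
    have hA' := SubNFA.mem_comps_of_T_eq_sub hB hp hT
    exact .one_run .failure hM (SubNFA.mem_allTransNF hB hp hF hT) rfl
      (ih hA' (hA.1 _ hA').1) rfl
  | plaSucc hM hF hT _ hr _ ih₁ ih₂ =>
    have hA' := SubNFA.mem_comps_of_T_eq_sub hB hp hT
    have hq' := by simpa only [hT] using (hA.1 _ hB).2.2 _ hp hF
    exact .two_run _ hM (SubNFA.mem_allTransNF hB hp hF hT) rfl (ih₁ hA' (hA.1 _ hA').1)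
      (LaResult.val_eq_success hr ▸ rfl) (ih₂ hB hq')

theorem CallTrace.hit_eq {v' : LaVal} (h : CallTrace A w c M M' v s) (hc : M c = some v') :
    v = v' ∧ M' = M := by
  cases h with
  | hit hM => exact ⟨Option.some.inj (hM.symm.trans hc), rfl⟩
  | leaf _ hM | one _ hM | two _ hM => simp [hM] at hc

theorem CallTrace.table_self (h : CallTrace A w c M M' v s) : M' c = some v := by
  cases h with
  | hit hM => exact hM
  | leaf | one | two => exact Function.update_self ..

theorem CallTrace.table_eq_none_iff (h : CallTrace A w c M M' v s) (x : S × ℕ) :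
    M' x = none ↔ M x = none ∧ .call x.1 x.2 ∉ s := by
  induction h with
  | hit => simp
  | leaf | one | two => grind

theorem CallTrace.eq_or_call_mem_tail {x : S × ℕ} (h : CallTrace A w c M M' v s)
    (hx : .call x.1 x.2 ∈ s) : x = c ∨ .call x.1 x.2 ∈ s.tail := by
  cases h <;> simp_all [Prod.ext_iff]

theorem CallTrace.eq_none_of_call_mem {x : S × ℕ} (h : CallTrace A w c M M' v s)
    (hx : .call x.1 x.2 ∈ s) : M x = none := by
  induction h with
  | hit => simp at hx
  | leaf _ hM => grind
  | one _ hM _ _ _ _ ih => grind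
  | two _ hM _ _ h₁ _ _ ih₁ ih₂ =>
    have := h₁.table_eq_none_iff x
    grind

theorem CallTrace.table_of_eq_some {x : S × ℕ} {u : LaVal} (h : CallTrace A w c M M' v s)
    (hx : M x = some u) : M' x = some u := by
  have update_ne {M₁ : LaTable S} {c : S × ℕ} {v : LaVal} {M : LaTable S} (hc : M c = none)
      (hx : M x = some u) (h₁ : M₁ x = some u) : Function.update M₁ c (some v) x = some u := by
    rwa [Function.update_of_ne]
    rintro rfl
    simp [hc] at hx
  induction h with
  | hit => exact hx
  | leaf _ hc => exact update_ne hc hx hx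
  | one _ hc _ _ _ _ ih => exact update_ne hc hx (ih hx)
  | two _ hc _ _ _ _ _ ih₁ ih₂ => exact update_ne hc hx (ih₂ (ih₁ hx))

theorem CallTrace.call_mem_of_memo_mem {x : S × ℕ} (h : CallTrace A w c M M' v s)
    (hx : M x = none) (hmem : .memo x.1 x.2 ∈ s) : .call x.1 x.2 ∈ s := by
  induction h with
  | @hit c _ _ hc =>
    have hxc : x = c := by simpa [Prod.ext_iff] using hmem
    simp [← hxc, hx] at hc
  | leaf => simp at hmem
  | one _ _ _ _ _ _ ih => exact .tail _ (ih hx (by simpa using hmem))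
  | @two c _ _ _ M M₁ _ _ _ s₁ _ _ _ _ _ h₁ _ _ ih₁ ih₂ =>
    refine .tail _ (List.mem_append.2 ?_)
    by_cases hx₁ : M₁ x = none
    · rcases List.mem_append.1 ((List.mem_cons.1 hmem).resolve_left nofun) with hmem | hmem
      · exact .inl (ih₁ hx hmem)
      · exact .inr (ih₂ hx₁ hmem)
    · refine .inl (by_contra fun hs => hx₁ ((h₁.table_eq_none_iff x).2 ⟨hx, hs⟩))

end CallTraces

section CallStack

variable [DecidableEq S]

/-- The evaluation of the key `c` may depend directly on that of the key `d`: `d` is the first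
subcall of `c`, or it is the second one according to the value which the table `M` holds for the
first. -/
def SubNFA.Awaits (A : SubNFA Sigma S) (w : List Sigma) (M : LaTable S) (c d : S × ℕ) : Prop :=
  ∃ t, (c.1, t) ∈ A.allTransNF ∧ (t.firstCall w c.2 = some d ∨
    ∃ c' v, t.firstCall w c.2 = some c' ∧ M c' = some v ∧ t.secondCall c.2 v = some d)

/-- `P` is a set of pending calls which may lie below a call on `c` made at table `M`: none of
them has a table value yet, and each awaits another one or `c`. -/
def SubNFA.CallStack (A : SubNFA Sigma S) (w : List Sigma) (M : LaTable S) (P : Set (S × ℕ))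
    (c : S × ℕ) : Prop :=
  ∀ f ∈ P, M f = none ∧ ∃ g ∈ insert c P, A.Awaits w M f g

variable {A : SubNFA Sigma S} {w : List Sigma} {c : S × ℕ} {M M' : LaTable S} {v : LaVal}
  {s : List (LaRunElem S)} {P : Set (S × ℕ)}

theorem CallTrace.awaits_mono {f g : S × ℕ} (h : CallTrace A w c M M' v s)
    (hfg : A.Awaits w M f g) : A.Awaits w M' f g := by
  obtain ⟨t, ht, hfirst | ⟨c', u, hc', hu, hg⟩⟩ := hfg
  · exact ⟨t, ht, .inl hfirst⟩
  · exact ⟨t, ht, .inr ⟨c', u, hc', h.table_of_eq_some hu, hg⟩⟩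

/-- Following the awaited keys inside `P` would give an infinite chain of nested calls. -/
theorem CallTrace.notMem_of_forall_awaits (hA : A.allStates.Nodup)
    (h : CallTrace A w c M M' v s)
    (hP : ∀ f ∈ P, M f = none ∧ ∃ g ∈ P, A.Awaits w M f g) : c ∉ P := by
  intro hc
  obtain ⟨hnone, g, hg, t', ht', hfg⟩ := hP c hc
  induction h generalizing t' g with
  | hit hM => simp [hM] at hnone
  | leaf _ _ hleaf => simp [hleaf t' ht'] at hfg
  | one _ _ ht hd h₁ hv ih =>
    obtain rfl := SubNFA.allTransNF_unique hA ht ht'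
    rcases hfg with hg' | ⟨c', u, hc', hu, hg'⟩
    · obtain rfl := Option.some.inj (hd.symm.trans hg')
      obtain ⟨hnone, f, hf, t, ht, hgf⟩ := hP _ hg
      exact ih hP hg hnone f hf t ht hgf
    · obtain rfl := Option.some.inj (hd.symm.trans hc')
      obtain ⟨rfl, -⟩ := h₁.hit_eq hu
      simp [hv] at hg'
  | two _ _ ht hd₁ h₁ hd₂ _ ih₁ ih₂ =>
    obtain rfl := SubNFA.allTransNF_unique hA ht ht'
    obtain ⟨hnone, f, hf, t, ht, hgf⟩ := hP _ hg
    rcases hfg with hg' | ⟨c', u, hc', hu, hg'⟩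
    · obtain rfl := Option.some.inj (hd₁.symm.trans hg')
      exact ih₁ hP hg hnone f hf t ht hgf
    · obtain rfl := Option.some.inj (hd₁.symm.trans hc')
      obtain ⟨rfl, rfl⟩ := h₁.hit_eq hu
      obtain rfl := Option.some.inj (hd₂.symm.trans hg')
      exact ih₂ hP hg hnone f hf t ht hgf

theorem SubNFA.CallStack.push {d : S × ℕ} (hP : A.CallStack w M P c) (hc : M c = none)
    (hcd : A.Awaits w M c d) : A.CallStack w M (insert c P) d := by
  rintro f (rfl | hf)
  · exact ⟨hc, d, .inl rfl, hcd⟩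
  · obtain ⟨hnone, g, hg, hfg⟩ := hP f hf
    exact ⟨hnone, g, .inr hg, hfg⟩

theorem SubNFA.CallStack.notMem (hA : A.allStates.Nodup) (hP : A.CallStack w M P c)
    (h : CallTrace A w c M M' v s) : c ∉ P := fun hc =>
  h.notMem_of_forall_awaits hA (by rwa [SubNFA.CallStack, Set.insert_eq_of_mem hc] at hP) hc

theorem SubNFA.CallStack.mono {d : S × ℕ} (hP : A.CallStack w M P c)
    (h : CallTrace A w d M M' v s) (hs : ∀ f ∈ P, .call f.1 f.2 ∉ s) : A.CallStack w M' P c := by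
  intro f hf
  obtain ⟨hnone, g, hg, hfg⟩ := hP f hf
  exact ⟨(h.table_eq_none_iff f).2 ⟨hnone, hs f hf⟩, g, hg, h.awaits_mono hfg⟩

theorem SubNFA.CallStack.call_notMem (hA : A.allStates.Nodup) (hP : A.CallStack w M P c)
    (h : CallTrace A w c M M' v s) (hs : ∀ f ∈ P, .call f.1 f.2 ∉ s.tail) :
    ∀ f ∈ P, .call f.1 f.2 ∉ s := by
  intro f hf hmem
  rcases h.eq_or_call_mem_tail hmem with rfl | hmem
  · exact hP.notMem hA h hf
  · exact hs f hf hmem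

theorem SubNFA.CallStack.call_notMem_tail (hA : A.allStates.Nodup) (hP : A.CallStack w M P c)
    (h : CallTrace A w c M M' v s) : ∀ f ∈ insert c P, .call f.1 f.2 ∉ s.tail := by
  induction h generalizing P with
  | hit | leaf => simp
  | one _ hM ht hd h₁ _ ih =>
    have hP₁ := hP.push hM ⟨_, ht, .inl hd⟩
    exact hP₁.call_notMem hA h₁ fun f hf => ih hP₁ f (.inr hf)
  | @two c d₁ d₂ _ _ _ _ _ _ _ _ _ hM ht hd₁ h₁ hd₂ h₂ ih₁ ih₂ =>
    have hP₁ := hP.push hM ⟨_, ht, .inl hd₁⟩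
    have hs₁ := hP₁.call_notMem hA h₁ fun f hf => ih₁ hP₁ f (.inr hf)
    have hM₁ := (h₁.table_eq_none_iff c).2 ⟨hM, hs₁ c (.inl rfl)⟩
    have hP₂ := (hP.mono h₁ fun f hf => hs₁ f (.inr hf)).push hM₁
      ⟨_, ht, .inr ⟨d₁, _, hd₁, h₁.table_self, hd₂⟩⟩
    have hs₂ := hP₂.call_notMem hA h₂ fun f hf => ih₂ hP₂ f (.inr hf)
    exact fun f hf hmem => (List.mem_append.1 hmem).elim (hs₁ f hf) (hs₂ f hf)

theorem CallTrace.call_notMem_tail (hA : A.allStates.Nodup) (h : CallTrace A w c M M' v s) :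
    .call c.1 c.2 ∉ s.tail :=
  SubNFA.CallStack.call_notMem_tail (P := ∅) hA nofun h c (.inl rfl)

theorem CallTrace.count_call_le_one (hA : A.allStates.Nodup) (h : CallTrace A w c M M' v s)
    (x : S × ℕ) : s.count (.call x.1 x.2) ≤ 1 := by
  have cons_le {e e' : LaRunElem S} {s : List (LaRunElem S)} (he : e ∉ s) (hs : s.count e' ≤ 1) :
      (e :: s).count e' ≤ 1 := by
    by_cases hee' : e = e'
    · simp [← hee', List.count_eq_zero.2 he]
    · rwa [List.count_cons_of_ne hee']
  have htail := h.call_notMem_tail hA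
  induction h with
  | hit => simp
  | leaf => exact List.count_le_length
  | one _ _ _ _ h₁ _ ih => exact cons_le htail (ih (h₁.call_notMem_tail hA))
  | @two _ _ _ _ _ M₁ _ _ _ s₁ s₂ _ _ _ _ h₁ _ h₂ ih₁ ih₂ =>
    refine cons_le htail (List.count_append.trans_le ?_)
    by_cases hx : M₁ x = none
    · have hs₁ := List.count_eq_zero.2 ((h₁.table_eq_none_iff x).1 hx).2
      simpa [hs₁] using ih₂ (h₂.call_notMem_tail hA)
    · have hs₂ := List.count_eq_zero.2 fun hmem => hx (h₂.eq_none_of_call_mem hmem)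
      simpa [hs₂] using ih₁ (h₁.call_notMem_tail hA)

end CallStack

section Accounting

variable [DecidableEq S]

/-- The position at which the transition `t` can enter a state for position `i`. For a character
transition and `i = 0`, where there is none, the value is the junk `0`. -/
def SubTrans.sourcePos (t : SubTrans Sigma S) (i : ℕ) : ℕ :=
  match t with
  | .char _ _ => i - 1
  | _ => i

/-- The number of pairs of a call in `s` and an entry into `q` of the transition taken by this
call, such that the call is at the position from which `q` is entered at `i`. -/
def SubNFA.callsInto (A : SubNFA Sigma S) (q : S) (i : ℕ) (s : List (LaRunElem S)) : ℕ :=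
  (A.allTransNF.map fun x => s.count (.call x.1 (x.2.sourcePos i)) * x.2.entries q).sum

variable {A : SubNFA Sigma S} {w : List Sigma} {c : S × ℕ} {M M' : LaTable S} {v : LaVal}
  {s : List (LaRunElem S)}

theorem SubNFA.callsInto_append (A : SubNFA Sigma S) (q : S) (i : ℕ)
    (s s' : List (LaRunElem S)) :
    A.callsInto q i (s ++ s') = A.callsInto q i s + A.callsInto q i s' := by
  simp only [SubNFA.callsInto, List.count_append, Nat.add_mul, List.sum_map_add]

theorem SubNFA.ite_entries_le_callsInto {t : SubTrans Sigma S} (ht : (c.1, t) ∈ A.allTransNF)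
    (q : S) (i : ℕ) :
    (if c.2 = t.sourcePos i then t.entries q else 0) ≤ A.callsInto q i [.call c.1 c.2] := by
  refine le_trans ?_ (List.single_le_sum (by simp) _ (List.mem_map_of_mem ht))
  simp [List.count_singleton]

theorem SubTrans.ite_firstCall_add_ite_secondCall_le (t : SubTrans Sigma S) (w : List Sigma)
    (j : ℕ) (v : LaVal) (x : S × ℕ) :
    (if t.firstCall w j = some x then 1 else 0) + (if t.secondCall j v = some x then 1 else 0) ≤
      if j = t.sourcePos x.2 then t.entries x.1 else 0 := by
  cases t <;> cases v <;>
    grind [SubTrans.firstCall, SubTrans.secondCall, SubTrans.sourcePos, SubTrans.entries,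
      SubTrans.hits, SubTrans.subAuts]

theorem CallTrace.count_add_count_le (h : CallTrace A w c M M' v s) (x : S × ℕ) :
    s.count (.call x.1 x.2) + s.count (.memo x.1 x.2) ≤
      (if c = x then 1 else 0) + A.callsInto x.1 x.2 s := by
  have call_cons (c : S × ℕ) (s : List (LaRunElem S)) :
      (LaRunElem.call c.1 c.2 :: s).count (.call x.1 x.2) +
          (LaRunElem.call c.1 c.2 :: s).count (.memo x.1 x.2) =
        (if c = x then 1 else 0) + (s.count (.call x.1 x.2) + s.count (.memo x.1 x.2)) := by
    grind [Prod.ext_iff]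
  induction h with
  | hit | leaf => simp [List.count_singleton, Prod.ext_iff]
  | @one c d t _ _ v₁ s _ _ ht hd _ _ ih =>
    have hsub := (t.ite_firstCall_add_ite_secondCall_le w c.2 v₁ x).trans
      (A.ite_entries_le_callsInto ht x.1 x.2)
    rw [call_cons, ← List.singleton_append, A.callsInto_append]
    simp only [hd, Option.some.injEq] at hsub
    omega
  | @two c d₁ d₂ t _ _ _ v₁ _ s₁ s₂ _ _ ht hd₁ _ hd₂ _ ih₁ ih₂ =>
    have hsub := (t.ite_firstCall_add_ite_secondCall_le w c.2 v₁ x).trans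
      (A.ite_entries_le_callsInto ht x.1 x.2)
    rw [call_cons, ← List.singleton_append, A.callsInto_append,
      A.callsInto_append, List.count_append, List.count_append]
    simp only [hd₁, hd₂, Option.some.injEq] at hsub
    omega

theorem CallTrace.callsInto_le (hA : A.allStates.Nodup) (h : CallTrace A w c M M' v s) (q : S)
    (i : ℕ) :
    A.callsInto q i s ≤ (A.allTransNF.map fun x => x.2.entries q).sum :=
  List.sum_le_sum fun x _ =>
    (Nat.mul_le_mul_right _ (h.count_call_le_one hA (x.1, x.2.sourcePos i))).trans_eq
      (Nat.one_mul _)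

end Accounting

theorem memoLa_lookup_bound_general [DecidableEq S] (A : SubNFA Sigma S) (hWF : A.WF)
    (w : List Sigma) (i₀ : ℕ) {M M' : LaTable S} {r : LaResult} {s : List (LaRunElem S)}
    (hrun : MemoLaRun w A A.q0 i₀ M M' r s) (q : S) (i : ℕ) (hM : M (q, i) = none) :
    s.count (LaRunElem.memo q i) ≤ A.inDeg q - 1 := by
  have h := hrun.callTrace hWF A.self_mem_comps (hWF.1 A A.self_mem_comps).1
  rw [← List.count_filter (p := LaRunElem.isCall) rfl]
  set s' := s.filter LaRunElem.isCall
  by_cases hmemo : .memo q i ∈ s'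
  · have hcall : 0 < s'.count (.call q i) :=
      List.count_pos_iff.2 (h.call_mem_of_memo_mem (x := (q, i)) hM hmemo)
    have hvisits : s'.count (.call q i) + s'.count (.memo q i) ≤ A.inDeg q := calc
      _ ≤ (if (A.q0, i₀) = (q, i) then 1 else 0) + A.callsInto q i s' :=
        h.count_add_count_le (q, i)
      _ ≤ (if A.q0 = q then 1 else 0) + (A.allTransNF.map fun x => x.2.entries q).sum := by
        gcongr
        · grind
        · exact h.callsInto_le hWF.2 q i
      _ ≤ A.inDeg q := (Nat.add_comm ..).trans_le (A.sum_entries_add_le_inDeg hWF q)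
    omega
  · rw [List.count_eq_zero.2 hmemo]
    exact Nat.zero_le _

/-- **Lemma 9** (memoization-table lookups are bounded by in-degree for `Memo-la`):
for every run `s` of an execution of `Memo-la`, every state `q ∈ P`, and every position
`i ∈ {0, …, |w|}`, the element `M(q, i)` appears at most `#in(q) − 1` times in `s`. -/
theorem memoLa_lookup_bound {Sigma S : Type} [DecidableEq S]
    (A : SubNFA Sigma S) (hWF : A.WF) (hLa : A.IsLaNFA) (hLoop : A.NoEpsLoops)
    (w : List Sigma) (i0 : ℕ) (hi0 : i0 ≤ w.length)
    {M' : S × ℕ → Option LaVal} {r : LaResult} {s : List (LaRunElem S)}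
    (hrun : MemoLaRun w A A.q0 i0 (fun _ => none) M' r s)
    (q : S) (hq : q ∈ A.allStates) (i : ℕ) (hi : i ≤ w.length) :
    s.count (LaRunElem.memo q i) ≤ A.inDeg q - 1 :=
  memoLa_lookup_bound_general A hWF w i0 hrun q i rfl

end RegexMemo
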